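/- Let 0 < α < 1 and 1 < p < ∞ satisfy αp > 1, and let δ₀ > 0. There exist constants c > 0 and C > 0, depending only on α, p and δ₀, such that for every θ ∈ (0,1], every Lipschitz function A : ℝ → ℝ with compact support and Lipschitz constant at most δ₀, with Ω = {z ∈ ℂ : Im z > A(Re z)} and F(w) = (1/π) ∫_ℝ A'(x)/((x + i·A(x) − w)²) dx, and every function g : ℂ → ℂ complex-differentiable at every w ∈ Ω with g'(w) = F(w): ∫_Ω (D^α g(z))^p dm(z) ≥ c·θ^{p−αp} ∫_Ω |F(z)|^p · dist(z, ∂Ω)^{p−αp} dm(z) − C·θ^{2p−αp} ∬_{ℝ×ℝ} |A'(x) − A'(y)|^p / |x − y|^{αp} dx dy. -/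

import Mathlib

open MeasureTheory

/-!
The lower bound needs no geometric correction: it already holds with the Besov term replaced by `0`
and with `θ = 1`, and `θ ^ (p - α * p) ≤ 1`.

Fix `z ∈ Ω` and put `d = dist(z, ∂Ω)`, so that the ball `B(z, d)` lies in `Ω`. The difference
quotient `h w = (g w - g z) / (w - z)`, extended by `h z = g' z = F z`, is holomorphic on `B(z, d)`,
and hence so is `h ^ 2`. The mean value property of `h ^ 2` on circles gives
`2π |F z| ^ 2 ≤ ∫ |h (z + ρ e^{iφ})| ^ 2 dφ` for `0 < ρ < d`. Since
`|g z - g w| ^ 2 / |z - w| ^ (2 + 2α) = |h w| ^ 2 / |z - w| ^ (2α)`, integrating in polar coordinates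
over the annulus `d/2 < |z - w| < d` yields `(D^α g z) ^ 2 ≥ |F z| ^ 2 d ^ (2 - 2α)`
(`sq_deriv_mul_le_lintegral_ball`). It remains to raise this pointwise estimate to the power `p / 2`
and integrate over `Ω`. Constants `c = C = 1` suffice.
-/

/-- The sub-mean-value inequality for `‖h‖ ^ 2` on circles, `h` holomorphic; it follows from the mean
value property of the holomorphic function `h ^ 2`. -/
lemma two_pi_mul_sq_le_lintegral_circle {h : ℂ → ℂ} {z : ℂ} {d ρ : ℝ}
    (hh : DifferentiableOn ℂ h (Metric.ball z d)) (hρ : 0 < ρ) (hρd : ρ < d) :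
    ENNReal.ofReal (2 * Real.pi) * ‖h z‖ₑ ^ 2 ≤
      ∫⁻ φ in Set.Ioo (-Real.pi) Real.pi, ‖h (circleMap z ρ φ)‖ₑ ^ 2 := by
  have hc : DiffContOnCl ℂ (fun w => h w ^ 2) (Metric.ball z |ρ|) := by
    rw [abs_of_pos hρ]
    apply DifferentiableOn.diffContOnCl
    rw [closure_ball _ hρ.ne']
    exact (hh.mono (Metric.closedBall_subset_ball hρd)).pow 2
  have key := hc.circleAverage
  rw [Real.circleAverage_eq_integral_add (-Real.pi),
    intervalIntegral.integral_comp_add_right (fun φ => h (circleMap z ρ φ) ^ 2)] at key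
  have h1 : ((2 * Real.pi : ℝ) : ℂ) * h z ^ 2 =
      ∫ φ in (-Real.pi)..Real.pi, h (circleMap z ρ φ) ^ 2 := by
    rw [← key, Complex.real_smul, ← mul_assoc, ← Complex.ofReal_mul,
      mul_inv_cancel₀ Real.two_pi_pos.ne']
    simp only [Complex.ofReal_one, one_mul]
    congr 1 <;> ring
  rw [intervalIntegral.integral_of_le (by linarith [Real.pi_pos])] at h1
  have h2 : ENNReal.ofReal (2 * Real.pi) * ‖h z‖ₑ ^ 2 =
      ‖((2 * Real.pi : ℝ) : ℂ) * h z ^ 2‖ₑ := by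
    rw [enorm_mul, enorm_pow, ← ofReal_norm (((2 * Real.pi : ℝ) : ℂ)),
      Complex.norm_real, Real.norm_of_nonneg Real.two_pi_pos.le]
  rw [h2, h1, restrict_Ioo_eq_restrict_Ioc]
  refine (enorm_integral_le_lintegral_enorm _).trans (le_of_eq ?_)
  simp only [enorm_pow]

/-- For `g` holomorphic on `B(z, d)`, the part of `(D^α g z) ^ 2` that comes from `B(z, d)` dominates
`|g' z| ^ 2 d ^ (2 - 2α)`. -/
lemma sq_deriv_mul_le_lintegral_ball {g : ℂ → ℂ} {z F : ℂ} {d α : ℝ} (hα : 0 < α) (hd : 0 < d)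
    (hg : DifferentiableOn ℂ g (Metric.ball z d)) (hF : HasDerivAt g F z) :
    ENNReal.ofReal (‖F‖ ^ 2 * d ^ (2 - 2 * α)) ≤
      ∫⁻ w in Metric.ball z d,
        ENNReal.ofReal (‖g z - g w‖ ^ (2 : ℝ) / ‖z - w‖ ^ (2 + 2 * α)) := by
  set h : ℂ → ℂ := dslope g z with hh_def
  have hh : DifferentiableOn ℂ h (Metric.ball z d) :=
    (Complex.differentiableOn_dslope (Metric.ball_mem_nhds z hd)).2 hg
  have hz : h z = F := by rw [hh_def, dslope_same, hF.deriv]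
  set f : ℂ → ENNReal := fun w =>
    ENNReal.ofReal (‖g z - g w‖ ^ (2 : ℝ) / ‖z - w‖ ^ (2 + 2 * α)) with hf
  set S : Set (ℝ × ℝ) := Set.Ioo (d / 2) d ×ˢ Set.Ioo (-Real.pi) Real.pi with hS
  have hSm : MeasurableSet S := measurableSet_Ioo.prod measurableSet_Ioo
  have hST : S ⊆ polarCoord.target := by
    rw [polarCoord_target]
    exact Set.prod_mono (fun x hx => lt_trans (by positivity) hx.1) subset_rfl
  set K : ENNReal := ENNReal.ofReal (d / 2 * d ^ (-(2 * α))) with hK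
  have hcirc : ∀ q : ℝ × ℝ, z + Complex.polarCoord.symm q = circleMap z q.1 q.2 := by
    intro q
    rw [Complex.polarCoord_symm_apply, circleMap, Complex.exp_mul_I]
    simp
  have hball : ∀ q ∈ S, circleMap z q.1 q.2 ∈ Metric.ball z d := by
    intro q hq
    have h1 : 0 < q.1 := lt_trans (by positivity) hq.1.1
    simpa [circleMap, abs_of_pos h1] using hq.1.2
  -- On the annulus the integrand, times the Jacobian `ρ`, is at least `(d/2) d ^ (-2α) |h| ^ 2`.
  have hpt : ∀ q ∈ S, K * ‖h (circleMap z q.1 q.2)‖ₑ ^ 2 ≤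
      ENNReal.ofReal q.1 •
        (Metric.ball z d).indicator f (z + Complex.polarCoord.symm q) := by
    intro q hq
    have h1 : 0 < q.1 := lt_trans (by positivity) hq.1.1
    rw [hcirc, Set.indicator_of_mem (hball q hq), smul_eq_mul, hf, hK]
    have hne : circleMap z q.1 q.2 ≠ z := circleMap_ne_center h1.ne'
    have hn : ‖z - circleMap z q.1 q.2‖ = q.1 := by
      rw [norm_sub_rev]; simp [circleMap, abs_of_pos h1]
    set w := circleMap z q.1 q.2
    have hg' : ‖g z - g w‖ = q.1 * ‖h w‖ := by
      rw [hh_def, dslope_of_ne _ hne, slope_def_field, norm_div, norm_sub_rev w z, hn,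
        norm_sub_rev (g w)]
      field_simp
    simp only []
    rw [← ofReal_norm, ← ENNReal.ofReal_pow (norm_nonneg _),
      ← ENNReal.ofReal_mul (by positivity), ← ENNReal.ofReal_mul h1.le]
    apply ENNReal.ofReal_le_ofReal
    rw [hg', hn, Real.rpow_add h1, Real.rpow_two, Real.rpow_two]
    have e : q.1 * ((q.1 * ‖h w‖) ^ 2 / (q.1 ^ 2 * q.1 ^ (2 * α))) =
        q.1 * q.1 ^ (-(2 * α)) * ‖h w‖ ^ 2 := by
      rw [Real.rpow_neg h1.le]
      field_simp
    rw [e]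
    have h3 : d ^ (-(2 * α)) ≤ q.1 ^ (-(2 * α)) :=
      Real.rpow_le_rpow_of_nonpos h1 hq.1.2.le (by linarith)
    have h4 : d / 2 ≤ q.1 := hq.1.1.le
    gcongr
  have hmeas : AEMeasurable (fun q : ℝ × ℝ => ‖h (circleMap z q.1 q.2)‖ₑ ^ 2)
      (volume.restrict S) := by
    apply ContinuousOn.aemeasurable _ hSm
    have hcm : Continuous fun q : ℝ × ℝ => circleMap z q.1 q.2 := by
      unfold circleMap; fun_prop
    have := hh.continuousOn.comp hcm.continuousOn hball
    exact (ENNReal.continuous_pow 2).comp_continuousOn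
      (continuous_enorm.comp_continuousOn this)
  have hmain : K * (ENNReal.ofReal (d / 2) * (ENNReal.ofReal (2 * Real.pi) * ‖F‖ₑ ^ 2)) ≤
      ∫⁻ w in Metric.ball z d, f w := by
    calc K * (ENNReal.ofReal (d / 2) * (ENNReal.ofReal (2 * Real.pi) * ‖F‖ₑ ^ 2))
        = K * ∫⁻ _ in Set.Ioo (d / 2) d, ENNReal.ofReal (2 * Real.pi) * ‖h z‖ₑ ^ 2 := by
          rw [setLIntegral_const, Real.volume_Ioo, hz, mul_comm (ENNReal.ofReal (d / 2))]
          congr 4; ring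
      _ ≤ K * ∫⁻ ρ in Set.Ioo (d / 2) d, ∫⁻ φ in Set.Ioo (-Real.pi) Real.pi,
            ‖h (circleMap z ρ φ)‖ₑ ^ 2 := by
          gcongr K * ?_
          refine setLIntegral_mono' measurableSet_Ioo fun ρ hρ => ?_
          exact two_pi_mul_sq_le_lintegral_circle hh (lt_trans (by positivity) hρ.1) hρ.2
      _ = K * ∫⁻ q in S, ‖h (circleMap z q.1 q.2)‖ₑ ^ 2 := by
          rw [hS, Measure.volume_eq_prod, ← Measure.prod_restrict, lintegral_prod]
          rwa [Measure.prod_restrict, ← Measure.volume_eq_prod]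
      _ = ∫⁻ q in S, K * ‖h (circleMap z q.1 q.2)‖ₑ ^ 2 :=
          (lintegral_const_mul'' K hmeas).symm
      _ ≤ ∫⁻ q in S, ENNReal.ofReal q.1 •
            (Metric.ball z d).indicator f (z + Complex.polarCoord.symm q) :=
          setLIntegral_mono' hSm hpt
      _ ≤ ∫⁻ q in polarCoord.target, ENNReal.ofReal q.1 •
            (Metric.ball z d).indicator f (z + Complex.polarCoord.symm q) :=
          lintegral_mono_set hST
      _ = ∫⁻ u, (Metric.ball z d).indicator f (z + u) :=
          Complex.lintegral_comp_polarCoord_symm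
            (fun u => (Metric.ball z d).indicator f (z + u))
      _ = ∫⁻ w, (Metric.ball z d).indicator f w :=
          lintegral_add_left_eq_self _ z
      _ = ∫⁻ w in Metric.ball z d, f w := lintegral_indicator Metric.isOpen_ball.measurableSet _
  refine le_trans ?_ hmain
  rw [hK, ← ofReal_norm, ← ENNReal.ofReal_pow (norm_nonneg _),
    ← ENNReal.ofReal_mul (by positivity), ← ENNReal.ofReal_mul (by positivity),
    ← ENNReal.ofReal_mul (by positivity)]
  apply ENNReal.ofReal_le_ofReal
  have e : d ^ (2 - 2 * α) = d * d * d ^ (-(2 * α)) := by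
    rw [sub_eq_add_neg, Real.rpow_add hd, Real.rpow_two, sq]
  rw [e]
  have hX : 0 ≤ ‖F‖ ^ 2 * (d * d * d ^ (-(2 * α))) := by positivity
  -- The constant produced by the annulus is `π / 2 ≥ 1`.
  nlinarith [Real.pi_gt_three]

lemma ball_infDist_frontier_subset {Ω : Set ℂ} (hΩ : IsOpen Ω) {z : ℂ} (hz : z ∈ Ω)
    (hd : 0 < Metric.infDist z (frontier Ω)) :
    Metric.ball z (Metric.infDist z (frontier Ω)) ⊆ Ω := by
  have hdisj : Disjoint (Metric.ball z (Metric.infDist z (frontier Ω))) (frontier Ω) :=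
    Metric.disjoint_ball_infDist
  refine (convex_ball z _).isPreconnected.subset_left_of_subset_union hΩ
    (isClosed_closure (s := Ω)).isOpen_compl
    (Set.disjoint_compl_right_iff_subset.2 subset_closure) ?_ ⟨z, Metric.mem_ball_self hd, hz⟩
  intro w hw
  by_contra hcon
  simp only [Set.mem_union, Set.mem_compl_iff, not_or, not_not] at hcon
  refine Set.disjoint_left.1 hdisj hw ?_
  rw [hΩ.frontier_eq]
  exact ⟨hcon.2, hcon.1⟩

/-- the lower bound
`∫_Ω (D^α g)^p dm ≥ c θ^{p-αp} ∫_Ω |F|^p dist(·,∂Ω)^{p-αp} dm − C θ^{2p-αp} ‖A'‖_{Ḃ^{α-1/p}_{p,p}}^p`,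
stated in the equivalent rearranged form
`c θ^{p-αp} ∫_Ω |F|^p dist^{p-αp} ≤ ∫_Ω (D^α g)^p + C θ^{2p-αp} ∬ |A'(x)-A'(y)|^p/|x-y|^{αp}`. -/
theorem statement3 (α p δ₀ : ℝ) (hα : 0 < α) (hα1 : α < 1) (hp1 : 1 < p) (hαp : 1 < α * p)
    (hδ₀ : 0 < δ₀) :
    ∃ c : ℝ, 0 < c ∧ ∃ C : ℝ, 0 < C ∧
      ∀ θ : ℝ, 0 < θ → θ ≤ 1 →
        ∀ A : ℝ → ℝ, LipschitzWith (Real.toNNReal δ₀) A → HasCompactSupport A →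
          ∀ g : ℂ → ℂ,
            (∀ w ∈ {w : ℂ | A w.re < w.im},
                HasDerivAt g
                  ((Real.pi : ℂ)⁻¹ *
                    ∫ x : ℝ, Complex.ofReal (deriv A x) /
                      (Complex.ofReal x + Complex.ofReal (A x) * Complex.I - w) ^ 2) w) →
            ENNReal.ofReal (c * θ ^ (p - α * p)) *
                (∫⁻ z in {w : ℂ | A w.re < w.im},
                  ENNReal.ofReal
                    (‖(Real.pi : ℂ)⁻¹ *
                        ∫ x : ℝ, Complex.ofReal (deriv A x) /
                          (Complex.ofReal x + Complex.ofReal (A x) * Complex.I - z) ^ 2‖ ^ p *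
                      Metric.infDist z (frontier {w : ℂ | A w.re < w.im}) ^ (p - α * p))) ≤
              (∫⁻ z in {w : ℂ | A w.re < w.im},
                  ((∫⁻ w in {w : ℂ | A w.re < w.im},
                      ENNReal.ofReal (‖g z - g w‖ ^ (2 : ℝ) / ‖z - w‖ ^ (2 + 2 * α))) ^
                    ((1 : ℝ) / 2)) ^ p) +
                ENNReal.ofReal (C * θ ^ (2 * p - α * p)) *
                  ∫⁻ x : ℝ, ∫⁻ y : ℝ,
                    ENNReal.ofReal (|deriv A x - deriv A y| ^ p / |x - y| ^ (α * p)) := by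
  refine ⟨1, one_pos, 1, one_pos, ?_⟩
  intro θ hθ hθ1 A hA _ g hg
  set Ω : Set ℂ := {w : ℂ | A w.re < w.im} with hΩ_def
  have hΩ : IsOpen Ω :=
    isOpen_lt (hA.continuous.comp Complex.continuous_re) Complex.continuous_im
  have hpα : 0 < p - α * p := by nlinarith
  have hθp : ENNReal.ofReal (1 * θ ^ (p - α * p)) ≤ 1 := by
    rw [one_mul]
    exact ENNReal.ofReal_le_one.2 (Real.rpow_le_one hθ.le hθ1 hpα.le)
  refine le_trans (mul_le_mul_left hθp _) ?_
  rw [one_mul]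
  refine le_trans ?_ le_self_add
  refine setLIntegral_mono' hΩ.measurableSet fun z hz => ?_
  set F : ℂ := (Real.pi : ℂ)⁻¹ *
    ∫ x : ℝ, Complex.ofReal (deriv A x) /
      (Complex.ofReal x + Complex.ofReal (A x) * Complex.I - z) ^ 2 with hF
  set d : ℝ := Metric.infDist z (frontier Ω) with hd
  have hd0 : 0 ≤ d := Metric.infDist_nonneg
  rcases hd0.eq_or_lt with h0 | hpos
  · simp [← h0, Real.zero_rpow hpα.ne']
  have hsub : Metric.ball z d ⊆ Ω := ball_infDist_frontier_subset hΩ hz hpos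
  have hdiff : DifferentiableOn ℂ g (Metric.ball z d) := fun w hw =>
    (hg w (hsub hw)).differentiableAt.differentiableWithinAt
  have key := (sq_deriv_mul_le_lintegral_ball hα hpos hdiff (hg z hz)).trans
    (lintegral_mono_set hsub)
  have e : ENNReal.ofReal (‖F‖ ^ p * d ^ (p - α * p)) =
      (ENNReal.ofReal (‖F‖ ^ 2 * d ^ (2 - 2 * α)) ^ ((1 : ℝ) / 2)) ^ p := by
    rw [← ENNReal.rpow_mul, ENNReal.ofReal_rpow_of_nonneg (by positivity) (by positivity),
      Real.mul_rpow (by positivity) (by positivity), ← Real.rpow_two,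
      ← Real.rpow_mul (norm_nonneg _), ← Real.rpow_mul hd0]
    congr 3 <;> ring
  rw [e]
  gcongr
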